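/- arXiv:1301.4585 — 3 statements merged into one kernel-verified Lean document; each statement's English description precedes it below -/
import Mathlib

section
/- For a single tiling G = KL with F ⊆ K, the projection P = Σ_{y ∈ K} P_{yL} satisfies the operator-norm estimate ‖P λ(s) − λ(s) P‖² ≤ 4 |F Δ Fs| / |F| for every s ∈ G, where Δ denotes symmetric difference. -/
open scoped InnerProductSpace Pointwise Classical symmDiff

/-!
The unitary `λ(s)` carries `ξ_{s⁻¹yL}` to a vector supported on `yL`, so, since `λ(s)` permutes the
cosets of `L`, the commutator is
`Σ_y (u_y ⊗ u_y^* - v_y ⊗ v_y^*) λ(s)` with `u_y = ξ_{yL}` and `v_y = λ(s) ξ_{s⁻¹yL}`, both supported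
on `yL` and of norm at most one. Writing `d_y = u_y - v_y`,
`u_y ⊗ u_y^* - v_y ⊗ v_y^* = d_y ⊗ u_y^* + v_y ⊗ d_y^*`.
Each of the three families `u`, `v`, `d` is orthogonal because its members live on disjoint cosets,
so a Bessel-type inequality (`norm_sum_inner_smul_sq_le`) bounds each of the two sums by
`sup_y ‖d_y‖`, and the commutator by twice this.

The tiling enters through a count (`sum_card_inter_le`): for fixed `f`, at most one `x` in a coset
`yL` has `f x ∈ K`, hence `Σ_{x ∈ yL} |K ∩ A x| ≤ |A|`. With `A = F` this gives `‖u_y‖ ≤ 1`. With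
`A = F ∆ F s⁻¹`, together with `(√a - √b)² ≤ |a - b|`, it gives `‖d_y‖² ≤ |F ∆ F s| / |F|`.
-/

/-! ### Orthogonal families in a Hilbert space -/

/-- Pythagoras for a finite sum of pairwise orthogonal vectors with coefficients. -/
lemma norm_sum_smul_sq {E ι : Type*} [NormedAddCommGroup E] [InnerProductSpace ℂ E]
    (t : Finset ι) (a : ι → E) (c : ι → ℂ)
    (ha : ∀ i ∈ t, ∀ j ∈ t, i ≠ j → inner ℂ (a i) (a j) = 0) :
    ‖∑ i ∈ t, c i • a i‖ ^ 2 = ∑ i ∈ t, ‖c i‖ ^ 2 * ‖a i‖ ^ 2 := by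
  have h : (inner ℂ (∑ i ∈ t, c i • a i) (∑ i ∈ t, c i • a i) : ℂ)
      = ∑ i ∈ t, ((‖c i‖ ^ 2 * ‖a i‖ ^ 2 : ℝ) : ℂ) := by
    rw [sum_inner]
    refine Finset.sum_congr rfl fun i hi => ?_
    rw [inner_sum, Finset.sum_eq_single i]
    · rw [inner_smul_left, inner_smul_right, inner_self_eq_norm_sq_to_K, ← mul_assoc,
        Complex.conj_mul']
      push_cast
      rfl
    · intro j hj hji
      rw [inner_smul_left, inner_smul_right, ha i hi j hj hji.symm]
      simp
    · exact fun h => absurd hi h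
  rw [inner_self_eq_norm_sq_to_K] at h
  refine Complex.ofReal_injective ?_
  push_cast at h ⊢
  exact h

/-- Bessel's inequality for an orthogonal family that need not be normalized. -/
lemma sum_norm_inner_sq_le {E ι : Type*} [NormedAddCommGroup E] [InnerProductSpace ℂ E]
    (t : Finset ι) (a : ι → E) (α : ℝ)
    (ha : ∀ i ∈ t, ∀ j ∈ t, i ≠ j → inner ℂ (a i) (a j) = 0) (hα : ∀ i ∈ t, ‖a i‖ ^ 2 ≤ α)
    (hα0 : 0 ≤ α) (ζ : E) :
    ∑ i ∈ t, ‖(inner ℂ (a i) ζ : ℂ)‖ ^ 2 ≤ α * ‖ζ‖ ^ 2 := by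
  set S := ∑ i ∈ t, ‖(inner ℂ (a i) ζ : ℂ)‖ ^ 2 with hS
  have hS0 : 0 ≤ S := Finset.sum_nonneg fun i _ => by positivity
  set w := ∑ i ∈ t, (inner ℂ (a i) ζ : ℂ) • a i with hw
  have h1 : (inner ℂ w ζ : ℂ) = (S : ℂ) := by
    rw [hw, sum_inner, hS]
    push_cast
    refine Finset.sum_congr rfl fun i _ => ?_
    rw [inner_smul_left, Complex.conj_mul']
  have h2 : ‖w‖ ^ 2 ≤ α * S := by
    rw [hw, norm_sum_smul_sq t a _ ha, hS, Finset.mul_sum]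
    refine Finset.sum_le_sum fun i hi => ?_
    rw [mul_comm]
    exact mul_le_mul_of_nonneg_right (hα i hi) (by positivity)
  have h3 : S ≤ ‖w‖ * ‖ζ‖ := by
    have := norm_inner_le_norm (𝕜 := ℂ) w ζ
    rwa [h1, Complex.norm_real, Real.norm_of_nonneg hS0] at this
  have h4 : S * S ≤ α * ‖ζ‖ ^ 2 * S := by
    calc S * S ≤ (‖w‖ * ‖ζ‖) * (‖w‖ * ‖ζ‖) := mul_self_le_mul_self hS0 h3
      _ = ‖w‖ ^ 2 * ‖ζ‖ ^ 2 := by ring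
      _ ≤ α * S * ‖ζ‖ ^ 2 := mul_le_mul_of_nonneg_right h2 (by positivity)
      _ = α * ‖ζ‖ ^ 2 * S := by ring
  rcases hS0.eq_or_lt with h | h
  · rw [← h]
    positivity
  · exact le_of_mul_le_mul_right h4 h

/-- The operator `Σ_i b_i ⊗ a_i^*` built from two orthogonal families has norm at most
`sup_i ‖a_i‖ · sup_i ‖b_i‖`. -/
lemma norm_sum_inner_smul_sq_le {E ι : Type*} [NormedAddCommGroup E] [InnerProductSpace ℂ E]
    (t : Finset ι) (a b : ι → E) (α β : ℝ)
    (ha : ∀ i ∈ t, ∀ j ∈ t, i ≠ j → inner ℂ (a i) (a j) = 0) (hα : ∀ i ∈ t, ‖a i‖ ^ 2 ≤ α)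
    (hb : ∀ i ∈ t, ∀ j ∈ t, i ≠ j → inner ℂ (b i) (b j) = 0) (hβ : ∀ i ∈ t, ‖b i‖ ^ 2 ≤ β)
    (hα0 : 0 ≤ α) (hβ0 : 0 ≤ β) (ζ : E) :
    ‖∑ i ∈ t, (inner ℂ (a i) ζ : ℂ) • b i‖ ^ 2 ≤ α * β * ‖ζ‖ ^ 2 := by
  rw [norm_sum_smul_sq t b _ hb]
  calc ∑ i ∈ t, ‖(inner ℂ (a i) ζ : ℂ)‖ ^ 2 * ‖b i‖ ^ 2
      ≤ ∑ i ∈ t, ‖(inner ℂ (a i) ζ : ℂ)‖ ^ 2 * β :=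
        Finset.sum_le_sum fun i hi => mul_le_mul_of_nonneg_left (hβ i hi) (by positivity)
    _ = (∑ i ∈ t, ‖(inner ℂ (a i) ζ : ℂ)‖ ^ 2) * β := by rw [Finset.sum_mul]
    _ ≤ α * ‖ζ‖ ^ 2 * β :=
        mul_le_mul_of_nonneg_right (sum_norm_inner_sq_le t a α ha hα hα0 ζ) hβ0
    _ = α * β * ‖ζ‖ ^ 2 := by ring

/-! ### Norms and orthogonality in `ℓ²(G)` -/

lemma inner_eq_zero_of_disjoint_support {G : Type*} (f g : lp (fun _ : G => ℂ) 2)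
    (h : ∀ x, f x = 0 ∨ g x = 0) : (inner ℂ f g : ℂ) = 0 := by
  rw [lp.inner_eq_tsum]
  convert tsum_zero with x
  rcases h x with h | h <;> simp [h]

lemma lp_norm_sq_le_of_sum_le {G : Type*} (f : lp (fun _ : G => ℂ) 2) (C : ℝ) (hC : 0 ≤ C)
    (h : ∀ X : Finset G, ∑ x ∈ X, ‖f x‖ ^ 2 ≤ C) : ‖f‖ ^ 2 ≤ C := by
  have h1 : ‖f‖ ≤ √C := by
    refine lp.norm_le_of_forall_sum_le (by norm_num) (Real.sqrt_nonneg C) fun X => ?_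
    simpa [Real.sq_sqrt hC] using h X
  calc ‖f‖ ^ 2 ≤ √C ^ 2 := pow_le_pow_left₀ (norm_nonneg _) h1 2
    _ = C := Real.sq_sqrt hC

lemma sq_sqrt_sub_sqrt_le (a b : ℝ) (ha : 0 ≤ a) (hb : 0 ≤ b) :
    (√a - √b) ^ 2 ≤ |a - b| := by
  have h : |a - b| = |√a - √b| * (√a + √b) := by
    rw [← abs_of_nonneg (add_nonneg (Real.sqrt_nonneg a) (Real.sqrt_nonneg b)), ← abs_mul]
    congr 1
    nlinarith [Real.sq_sqrt ha, Real.sq_sqrt hb]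
  rw [h, ← sq_abs, sq]
  refine mul_le_mul_of_nonneg_left ?_ (abs_nonneg _)
  rw [abs_le]
  constructor <;> linarith [Real.sqrt_nonneg a, Real.sqrt_nonneg b]

/-! ### Counting in a tiling -/

/-- Two elements of `K` in the same left coset of `L` coincide. -/
lemma tiling_eq {G : Type*} [Group G] {L : Subgroup G} {K : Finset G}
    (htiling : ∀ g : G, ∃! kl : G × G, kl.1 ∈ K ∧ kl.2 ∈ L ∧ g = kl.1 * kl.2)
    {k k' : G} (hk : k ∈ K) (hk' : k' ∈ K) (h : k⁻¹ * k' ∈ L) : k = k' := by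
  have := (htiling k').unique (y₁ := (k, k⁻¹ * k')) (y₂ := (k', 1))
    ⟨hk, h, by simp⟩ ⟨hk', L.one_mem, by simp⟩
  exact congrArg Prod.fst this

/-- For each `a ∈ A`, at most one `x` in the coset `yL` satisfies `a x ∈ K`; summing over `A` gives
`Σ_{x ∈ yL} |K ∩ A x| ≤ |A|`. -/
lemma sum_card_inter_le {G : Type*} [Group G] {L : Subgroup G} {K : Finset G}
    (htiling : ∀ g : G, ∃! kl : G × G, kl.1 ∈ K ∧ kl.2 ∈ L ∧ g = kl.1 * kl.2)
    (A X : Finset G) (y : G) (hX : ∀ x ∈ X, y⁻¹ * x ∈ L) :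
    ∑ x ∈ X, (K ∩ A.image (· * x)).card ≤ A.card := by
  have h1 : ∀ x, (K ∩ A.image (· * x)).card = ∑ a ∈ A, if a * x ∈ K then 1 else 0 := by
    intro x
    rw [← Finset.card_filter,
      ← Finset.card_image_of_injective (A.filter (· * x ∈ K)) (mul_left_injective x)]
    congr 1
    ext z
    simp only [Finset.mem_inter, Finset.mem_image, Finset.mem_filter]
    constructor
    · rintro ⟨hz, a, ha, rfl⟩
      exact ⟨a, ⟨ha, hz⟩, rfl⟩
    · rintro ⟨a, ⟨ha, hz⟩, rfl⟩
      exact ⟨hz, a, ha, rfl⟩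
  simp_rw [h1]
  rw [Finset.sum_comm, Finset.card_eq_sum_ones]
  refine Finset.sum_le_sum fun a _ => ?_
  rw [← Finset.card_filter, Finset.card_le_one]
  intro x hx x' hx'
  rw [Finset.mem_filter] at hx hx'
  refine mul_left_cancel (tiling_eq htiling hx.2 hx'.2 ?_)
  have := L.mul_mem (L.inv_mem (hX x hx.1)) (hX x' hx'.1)
  convert this using 1
  group

lemma abs_card_inter_sub_le {G : Type*} (K A B : Finset G) :
    |((K ∩ A).card : ℝ) - (K ∩ B).card| ≤ (K ∩ (A ∆ B)).card := by
  have key : ∀ A B : Finset G, (K ∩ A).card ≤ (K ∩ B).card + (K ∩ (A ∆ B)).card := by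
    intro A B
    refine le_trans (Finset.card_le_card fun x hx => ?_) (Finset.card_union_le _ _)
    simp only [Finset.mem_inter, Finset.mem_union, Finset.mem_symmDiff] at hx ⊢
    tauto
  have h1 : ((K ∩ A).card : ℝ) ≤ (K ∩ B).card + (K ∩ (A ∆ B)).card := mod_cast key A B
  have h2 : ((K ∩ B).card : ℝ) ≤ (K ∩ A).card + (K ∩ (A ∆ B)).card := by
    rw [symmDiff_comm]
    exact mod_cast key B A
  rw [abs_le]
  constructor <;> linarith

lemma card_symmDiff_image_inv {G : Type*} [Group G] (F : Finset G) (s : G) :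
    (F ∆ F.image (· * s⁻¹)).card = (F ∆ F.image (· * s)).card := by
  rw [← Finset.card_image_of_injective (F ∆ F.image (· * s⁻¹)) (mul_left_injective s),
    Finset.image_symmDiff _ _ (mul_left_injective s), Finset.image_image]
  have : ((fun x => x * s) ∘ fun x => x * s⁻¹) = id := by
    ext x
    simp
  rw [this, Finset.image_id, symmDiff_comm]

/-! ### The commutator -/

/-- For a single tiling `G = K L` with `F ⊆ K`, the projection `P = Σ_{y ∈ K} P_{yL}`
satisfies `‖P λ(s) − λ(s) P‖² ≤ 4 |F Δ Fs| / |F|` for every `s ∈ G`. -/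
theorem proj_commutator_estimate
    {G : Type*} [Group G] (L : Subgroup G) (K : Finset G)
    (htiling : ∀ g : G, ∃! kl : G × G, kl.1 ∈ K ∧ kl.2 ∈ L ∧ g = kl.1 * kl.2)
    (F : Finset G) (hF : F.Nonempty) (hFK : F ⊆ K)
    (φ : G → ℝ)
    (hφ : ∀ x : G, φ x = Real.sqrt (((K ∩ F.image (· * x)).card : ℝ) / (F.card : ℝ)))
    (ξ : G → lp (fun _ : G => ℂ) 2)
    (hξ : ∀ g x : G, ξ g x = if g⁻¹ * x ∈ L then (φ x : ℂ) else 0)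
    (P : lp (fun _ : G => ℂ) 2 →L[ℂ] lp (fun _ : G => ℂ) 2)
    (hP : P = ∑ y ∈ K, (innerSL ℂ (ξ y)).smulRight (ξ y))
    (lam : G → (lp (fun _ : G => ℂ) 2 →L[ℂ] lp (fun _ : G => ℂ) 2))
    (hlam : ∀ (s : G) (η : lp (fun _ : G => ℂ) 2) (x : G), lam s η x = η (s⁻¹ * x))
    (s : G) :
    ‖P ∘L lam s - lam s ∘L P‖ ^ 2 ≤ 4 * (((F ∆ F.image (· * s)).card : ℝ) / (F.card : ℝ)) := by
  have hFpos : (0 : ℝ) < F.card := by exact_mod_cast hF.card_pos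
  set δ : ℝ := ((F ∆ F.image (· * s)).card : ℝ) / (F.card : ℝ) with hδ
  have hδ0 : 0 ≤ δ := by positivity
  have hlam_inner : ∀ a b : lp (fun _ : G => ℂ) 2,
      (inner ℂ (lam s a) (lam s b) : ℂ) = inner ℂ a b := by
    intro a b
    rw [lp.inner_eq_tsum, lp.inner_eq_tsum]
    simp_rw [hlam]
    exact (Equiv.mulLeft s⁻¹).tsum_eq (fun x => (inner ℂ (a x) (b x) : ℂ))
  have hlam_norm : ∀ a : lp (fun _ : G => ℂ) 2, ‖lam s a‖ = ‖a‖ := by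
    intro a
    rw [@norm_eq_sqrt_re_inner ℂ, @norm_eq_sqrt_re_inner ℂ _ _ _ _ a, hlam_inner]
  have hξ_congr : ∀ g g' : G, g⁻¹ * g' ∈ L → ξ g = ξ g' := by
    intro g g' h
    ext x
    rw [hξ, hξ]
    have : g⁻¹ * x ∈ L ↔ g'⁻¹ * x ∈ L := by
      rw [show g⁻¹ * x = (g⁻¹ * g') * (g'⁻¹ * x) by group]
      exact L.mul_mem_cancel_left h
    simp only [this]
  have hφ0 : ∀ x, φ x ^ 2 = ((K ∩ F.image (· * x)).card : ℝ) / F.card := by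
    intro x
    rw [hφ, Real.sq_sqrt (by positivity)]
  -- Pointwise bounds supported on one coset sum up by the counting lemma.
  have hbound : ∀ (f : lp (fun _ : G => ℂ) 2) (A : Finset G) (y : G),
      (∀ x, y⁻¹ * x ∉ L → f x = 0) →
      (∀ x, y⁻¹ * x ∈ L → ‖f x‖ ^ 2 ≤ ((K ∩ A.image (· * x)).card : ℝ) / F.card) →
      ‖f‖ ^ 2 ≤ (A.card : ℝ) / F.card := by
    intro f A y h0 h1
    refine lp_norm_sq_le_of_sum_le f _ (by positivity) fun X => ?_
    have hsub : ∑ x ∈ X, ‖f x‖ ^ 2 = ∑ x ∈ X with y⁻¹ * x ∈ L, ‖f x‖ ^ 2 := by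
      rw [Finset.sum_filter]
      refine Finset.sum_congr rfl fun x _ => ?_
      split_ifs with hx
      · rfl
      · simp [h0 x hx]
    rw [hsub]
    calc ∑ x ∈ X with y⁻¹ * x ∈ L, ‖f x‖ ^ 2
        ≤ ∑ x ∈ X with y⁻¹ * x ∈ L, ((K ∩ A.image (· * x)).card : ℝ) / F.card :=
          Finset.sum_le_sum fun x hx => h1 x (Finset.mem_filter.1 hx).2
      _ = ((∑ x ∈ X with y⁻¹ * x ∈ L, (K ∩ A.image (· * x)).card : ℕ) : ℝ) / F.card := by
          rw [← Finset.sum_div]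
          push_cast
          rfl
      _ ≤ (A.card : ℝ) / F.card := by
          refine div_le_div_of_nonneg_right ?_ hFpos.le
          exact_mod_cast sum_card_inter_le htiling A _ y fun x hx => (Finset.mem_filter.1 hx).2
  have hξ_norm : ∀ y, ‖ξ y‖ ^ 2 ≤ 1 := by
    intro y
    rw [← div_self hFpos.ne']
    refine hbound (ξ y) F y (fun x hx => by rw [hξ, if_neg hx]) fun x hx => ?_
    rw [hξ, if_pos hx, Complex.norm_real, Real.norm_eq_abs, sq_abs, hφ0]
  set v : G → lp (fun _ : G => ℂ) 2 := fun y => lam s (ξ (s⁻¹ * y)) with hv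
  have hv_apply : ∀ y x, v y x = if y⁻¹ * x ∈ L then (φ (s⁻¹ * x) : ℂ) else 0 := by
    intro y x
    simp only [hv]
    rw [hlam, hξ, show (s⁻¹ * y)⁻¹ * (s⁻¹ * x) = y⁻¹ * x by group]
  have hv_norm : ∀ y, ‖v y‖ ^ 2 ≤ 1 := by
    intro y
    simp only [hv]
    rw [hlam_norm]
    exact hξ_norm _
  have hd_norm : ∀ y, ‖ξ y - v y‖ ^ 2 ≤ δ := by
    intro y
    rw [hδ, ← card_symmDiff_image_inv]
    refine hbound (ξ y - v y) _ y (fun x hx => ?_) fun x hx => ?_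
    · rw [lp.coeFn_sub, Pi.sub_apply, hξ, hv_apply, if_neg hx, if_neg hx, sub_zero]
    · rw [lp.coeFn_sub, Pi.sub_apply, hξ, hv_apply, if_pos hx, if_pos hx, ← Complex.ofReal_sub,
        Complex.norm_real, Real.norm_eq_abs, sq_abs, hφ, hφ]
      refine (sq_sqrt_sub_sqrt_le _ _ (by positivity) (by positivity)).trans ?_
      rw [← sub_div, abs_div, abs_of_pos hFpos]
      refine div_le_div_of_nonneg_right ?_ hFpos.le
      refine (abs_card_inter_sub_le K _ _).trans_eq ?_
      rw [Finset.image_symmDiff _ _ (mul_left_injective x), Finset.image_image]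
      congr 6
      ext z
      simp [mul_assoc]
  -- Vectors supported on the cosets of distinct elements of `K` are orthogonal.
  have horth : ∀ f : G → lp (fun _ : G => ℂ) 2, (∀ y x, y⁻¹ * x ∉ L → f y x = 0) →
      ∀ i ∈ K, ∀ j ∈ K, i ≠ j → (inner ℂ (f i) (f j) : ℂ) = 0 := by
    intro f hf i hi j hj hij
    refine inner_eq_zero_of_disjoint_support _ _ fun x => ?_
    by_contra! hne
    have h1 : i⁻¹ * x ∈ L := by
      by_contra h
      exact hne.1 (hf i x h)
    have h2 : j⁻¹ * x ∈ L := by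
      by_contra h
      exact hne.2 (hf j x h)
    refine hij (tiling_eq htiling hi hj ?_)
    rw [show i⁻¹ * j = (i⁻¹ * x) * (j⁻¹ * x)⁻¹ by group]
    exact L.mul_mem h1 (L.inv_mem h2)
  have hξ_supp : ∀ y x, y⁻¹ * x ∉ L → ξ y x = 0 := fun y x h => by rw [hξ, if_neg h]
  have hv_supp : ∀ y x, y⁻¹ * x ∉ L → v y x = 0 := fun y x h => by rw [hv_apply, if_neg h]
  have hd_supp : ∀ y x, y⁻¹ * x ∉ L → (ξ y - v y) x = 0 := fun y x h => by
    rw [lp.coeFn_sub, Pi.sub_apply, hξ_supp y x h, hv_supp y x h, sub_zero]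
  -- `σ y` is the element of `K` representing the coset `s⁻¹yL`; it permutes `K`.
  have hrep : ∀ y : G, ∃ k ∈ K, k⁻¹ * (s⁻¹ * y) ∈ L := by
    intro y
    obtain ⟨kl, ⟨hk, hl, he⟩, -⟩ := htiling (s⁻¹ * y)
    refine ⟨kl.1, hk, ?_⟩
    rw [he, inv_mul_cancel_left]
    exact hl
  choose σ hσK hσL using hrep
  have hσ_inj : Set.InjOn σ K := by
    intro y hy y' hy' h
    refine tiling_eq htiling hy hy' ?_
    have h1 := L.mul_mem (L.inv_mem (hσL y)) (h ▸ hσL y')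
    convert h1 using 1
    group
  have hσ_image : K.image σ = K :=
    Finset.eq_of_subset_of_card_le (Finset.image_subset_iff.2 fun y _ => hσK y)
      (Finset.card_image_of_injOn hσ_inj).ge
  have hlamP : ∀ η, lam s (P η) = ∑ y ∈ K, (inner ℂ (v y) (lam s η) : ℂ) • v y := by
    intro η
    have h1 : P η = ∑ y ∈ K, (inner ℂ (ξ y) η : ℂ) • ξ y := by
      rw [hP]
      simp
    rw [h1, map_sum, ← hσ_image, Finset.sum_image hσ_inj, hσ_image]
    refine Finset.sum_congr rfl fun y _ => ?_
    simp only [hv]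
    rw [hlam_inner, map_smul, hξ_congr _ _ (hσL y)]
  have hPlam : ∀ η, P (lam s η) = ∑ y ∈ K, (inner ℂ (ξ y) (lam s η) : ℂ) • ξ y := by
    intro η
    rw [hP]
    simp
  have hop : ‖P ∘L lam s - lam s ∘L P‖ ≤ 2 * √δ := by
    refine ContinuousLinearMap.opNorm_le_bound _ (by positivity) fun η => ?_
    set ζ := lam s η with hζ
    have hsplit : (P ∘L lam s - lam s ∘L P) η
        = ∑ y ∈ K, (inner ℂ (ξ y) ζ : ℂ) • (ξ y - v y)
          + ∑ y ∈ K, (inner ℂ (ξ y - v y) ζ : ℂ) • v y := by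
      rw [sub_apply, ContinuousLinearMap.comp_apply,
        ContinuousLinearMap.comp_apply, hlamP, hPlam, ← Finset.sum_sub_distrib,
        ← Finset.sum_add_distrib]
      refine Finset.sum_congr rfl fun y _ => ?_
      rw [inner_sub_left, smul_sub, sub_smul]
      abel
    have hroot : ∀ w : lp (fun _ : G => ℂ) 2, ‖w‖ ^ 2 ≤ δ * ‖ζ‖ ^ 2 → ‖w‖ ≤ √δ * ‖η‖ := by
      intro w hw
      refine (sq_le_sq₀ (norm_nonneg _) (by positivity)).1 ?_
      rwa [mul_pow, Real.sq_sqrt hδ0, ← hlam_norm η]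
    have hA := hroot _ (by
      simpa only [one_mul, mul_one] using norm_sum_inner_smul_sq_le K ξ (fun y => ξ y - v y) 1 δ (horth ξ hξ_supp)
        (fun y _ => hξ_norm y) (horth _ hd_supp) (fun y _ => hd_norm y) zero_le_one hδ0 ζ)
    have hB := hroot _ (by
      simpa only [one_mul, mul_one] using norm_sum_inner_smul_sq_le K (fun y => ξ y - v y) v δ 1 (horth _ hd_supp)
        (fun y _ => hd_norm y) (horth v hv_supp) (fun y _ => hv_norm y) hδ0 zero_le_one ζ)
    rw [hsplit]
    refine (norm_add_le _ _).trans ?_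
    linarith
  calc ‖P ∘L lam s - lam s ∘L P‖ ^ 2 ≤ (2 * √δ) ^ 2 :=
        pow_le_pow_left₀ (norm_nonneg _) hop 2
    _ = 4 * δ := by
        rw [mul_pow, Real.sq_sqrt hδ0]
        norm_num
end

section
/- For every positive integer n, with K_n = {s^k t^l u^m : k, l, m ∈ ℤ, −n/2 < k, l, m ≤ n/2} and L_n = ⟨s^n, t^n, u^n⟩, every element of the integer Heisenberg group H can be written uniquely as a product of an element of K_n and an element of L_n (i.e. H = K_n L_n is a tiling). -/
/-!
An upper unitriangular matrix is determined by its entries `(a, b, c)` at positions `(0,1)`,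
`(1,2)`, `(0,2)`, and in these coordinates `(a, b, c) * (a', b', c') = (a + a', b + b', c + c' + a b')`.
Hence `s^k t^l u^m = (k, l, k l + m)`, and the subgroup generated by `s^n, t^n, u^n` consists exactly
of the triples all of whose coordinates are divisible by `n` (`Heisenberg.mem_closure_iff`).

So `(x, y, z) = s^k t^l u^m * (n a, n b, n c)` is the triangular system `x = k + n a`, `y = l + n b`,
`z - k l - k n b = m + n c`. Since every integer has exactly one representative modulo `n` in
`(-n/2, n/2]`, the first two equations determine `k, a, l, b`, and then the third determines `m, c`.
-/

set_option linter.unnecessarySeqFocus false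

/-- A 3×3 integer matrix is upper unitriangular. -/
def IsUnitriangular (M : Matrix (Fin 3) (Fin 3) ℤ) : Prop :=
  M 0 0 = 1 ∧ M 1 1 = 1 ∧ M 2 2 = 1 ∧ M 1 0 = 0 ∧ M 2 0 = 0 ∧ M 2 1 = 0

/-- The integer Heisenberg group: 3×3 upper unitriangular integer matrices under matrix
multiplication. -/
def Heisenberg : Type := {M : Matrix (Fin 3) (Fin 3) ℤ // IsUnitriangular M}

namespace Heisenberg

instance : Group Heisenberg where
  mul A B := ⟨A.1 * B.1, by
    obtain ⟨a1, a2, a3, a4, a5, a6⟩ := A.2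
    obtain ⟨b1, b2, b3, b4, b5, b6⟩ := B.2
    refine ⟨?_, ?_, ?_, ?_, ?_, ?_⟩ <;>
      simp [Matrix.mul_apply, Fin.sum_univ_three, a1, a2, a3, a4, a5, a6,
        b1, b2, b3, b4, b5, b6]⟩
  one := ⟨1, by refine ⟨?_, ?_, ?_, ?_, ?_, ?_⟩ <;> simp [Matrix.one_apply]⟩
  inv A := ⟨!![1, -(A.1 0 1), A.1 0 1 * A.1 1 2 - A.1 0 2;
               0, 1, -(A.1 1 2);
               0, 0, 1], by
    refine ⟨?_, ?_, ?_, ?_, ?_, ?_⟩ <;> rfl⟩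
  mul_assoc A B C := Subtype.ext (Matrix.mul_assoc A.1 B.1 C.1)
  one_mul A := Subtype.ext (Matrix.one_mul A.1)
  mul_one A := Subtype.ext (Matrix.mul_one A.1)
  inv_mul_cancel A := by
    obtain ⟨M, a1, a2, a3, a4, a5, a6⟩ := A
    apply Subtype.ext
    show _ * M = (1 : Matrix (Fin 3) (Fin 3) ℤ)
    ext i j
    fin_cases i <;> fin_cases j <;>
      simp [Matrix.mul_apply, Fin.sum_univ_three, Matrix.one_apply,
        a1, a2, a3, a4, a5, a6] <;> ring

/-- The generator `s` of the integer Heisenberg group. -/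
def s : Heisenberg :=
  ⟨!![1, 1, 0; 0, 1, 0; 0, 0, 1], by refine ⟨?_, ?_, ?_, ?_, ?_, ?_⟩ <;> rfl⟩

/-- The generator `t` of the integer Heisenberg group. -/
def t : Heisenberg :=
  ⟨!![1, 0, 0; 0, 1, 1; 0, 0, 1], by refine ⟨?_, ?_, ?_, ?_, ?_, ?_⟩ <;> rfl⟩

/-- The element `u = [s,t] = s⁻¹t⁻¹st` of the integer Heisenberg group. -/
def u : Heisenberg :=
  ⟨!![1, 0, 1; 0, 1, 0; 0, 0, 1], by refine ⟨?_, ?_, ?_, ?_, ?_, ?_⟩ <;> rfl⟩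

end Heisenberg

namespace Heisenberg

/-- The element with entries `a`, `b`, `c` at positions `(0,1)`, `(1,2)`, `(0,2)`. -/
def ofCoords (a b c : ℤ) : Heisenberg :=
  ⟨!![1, a, c; 0, 1, b; 0, 0, 1], by refine ⟨?_, ?_, ?_, ?_, ?_, ?_⟩ <;> rfl⟩

lemma exists_ofCoords (g : Heisenberg) : ∃ a b c : ℤ, g = ofCoords a b c := by
  obtain ⟨M, a1, a2, a3, a4, a5, a6⟩ := g
  refine ⟨M 0 1, M 1 2, M 0 2, Subtype.ext ?_⟩
  ext i j
  fin_cases i <;> fin_cases j <;> simp [ofCoords, a1, a2, a3, a4, a5, a6]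

lemma ofCoords_inj {a b c a' b' c' : ℤ} :
    ofCoords a b c = ofCoords a' b' c' ↔ a = a' ∧ b = b' ∧ c = c' := by
  constructor
  · intro h
    have h' := congrArg Subtype.val h
    exact ⟨congrFun (congrFun h' 0) 1, congrFun (congrFun h' 1) 2, congrFun (congrFun h' 0) 2⟩
  · rintro ⟨rfl, rfl, rfl⟩
    rfl

lemma ofCoords_mul (a b c a' b' c' : ℤ) :
    ofCoords a b c * ofCoords a' b' c' = ofCoords (a + a') (b + b') (c + c' + a * b') := by
  apply Subtype.ext
  change (!![1, a, c; 0, 1, b; 0, 0, 1] : Matrix (Fin 3) (Fin 3) ℤ)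
    * !![1, a', c'; 0, 1, b'; 0, 0, 1] = !![1, a + a', c + c' + a * b'; 0, 1, b + b'; 0, 0, 1]
  ext i j
  fin_cases i <;> fin_cases j <;> simp [Matrix.mul_apply, Fin.sum_univ_three] <;> ring

lemma ofCoords_zero : ofCoords 0 0 0 = 1 := by
  have h : ofCoords 0 0 0 * ofCoords 0 0 0 = ofCoords 0 0 0 := by simp [ofCoords_mul]
  exact mul_eq_left.mp h

lemma ofCoords_inv (a b c : ℤ) : (ofCoords a b c)⁻¹ = ofCoords (-a) (-b) (a * b - c) := by
  rw [inv_eq_iff_mul_eq_one, ofCoords_mul, ← ofCoords_zero, ofCoords_inj]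
  refine ⟨?_, ?_, ?_⟩ <;> ring

/-- A map from `ℤ` to a group that turns addition into multiplication is `k ↦ (f 1) ^ k`. -/
lemma zpow_eq_of_map_add {G : Type*} [Group G] (f : ℤ → G) (h : ∀ j k, f (j + k) = f j * f k)
    (k : ℤ) : f 1 ^ k = f k := by
  let F : Multiplicative ℤ →* G := MonoidHom.mk' (fun j => f j.toAdd) fun i j => h i.toAdd j.toAdd
  have := (map_zpow F (Multiplicative.ofAdd 1) k).symm
  rw [← ofAdd_zsmul] at this
  simpa [F] using this

lemma s_zpow (k : ℤ) : s ^ k = ofCoords k 0 0 :=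
  zpow_eq_of_map_add (fun k => ofCoords k 0 0) (fun i j => by simp [ofCoords_mul]) k

lemma t_zpow (k : ℤ) : t ^ k = ofCoords 0 k 0 :=
  zpow_eq_of_map_add (fun k => ofCoords 0 k 0) (fun i j => by simp [ofCoords_mul]) k

lemma u_zpow (k : ℤ) : u ^ k = ofCoords 0 0 k :=
  zpow_eq_of_map_add (fun k => ofCoords 0 0 k) (fun i j => by simp [ofCoords_mul]) k

lemma s_t_u_zpow (k l m : ℤ) : s ^ k * t ^ l * u ^ m = ofCoords k l (k * l + m) := by
  rw [s_zpow, t_zpow, u_zpow, ofCoords_mul, ofCoords_mul, ofCoords_inj]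
  refine ⟨?_, ?_, ?_⟩ <;> ring

lemma mem_closure_iff (n : ℕ) (g : Heisenberg) :
    g ∈ Subgroup.closure {s ^ n, t ^ n, u ^ n} ↔
      ∃ a b c : ℤ, g = ofCoords (n * a) (n * b) (n * c) := by
  constructor
  · intro hg
    induction hg using Subgroup.closure_induction with
    | mem x hx =>
      simp only [Set.mem_insert_iff, Set.mem_singleton_iff, ← zpow_natCast, s_zpow, t_zpow,
        u_zpow] at hx
      rcases hx with rfl | rfl | rfl
      · exact ⟨1, 0, 0, by simp⟩
      · exact ⟨0, 1, 0, by simp⟩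
      · exact ⟨0, 0, 1, by simp⟩
    | one => exact ⟨0, 0, 0, by simp [ofCoords_zero]⟩
    | mul x y _ _ hx hy =>
      obtain ⟨a, b, c, rfl⟩ := hx
      obtain ⟨a', b', c', rfl⟩ := hy
      refine ⟨a + a', b + b', c + c' + n * a * b', ?_⟩
      rw [ofCoords_mul, ofCoords_inj]
      refine ⟨?_, ?_, ?_⟩ <;> ring
    | inv x _ hx =>
      obtain ⟨a, b, c, rfl⟩ := hx
      refine ⟨-a, -b, n * a * b - c, ?_⟩
      rw [ofCoords_inv, ofCoords_inj]
      refine ⟨?_, ?_, ?_⟩ <;> ring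
  · rintro ⟨a, b, c, rfl⟩
    -- The third exponent compensates for the `n² a b` in the corner of `(s^n)^a (t^n)^b`.
    have h : ofCoords (n * a) (n * b) (n * c)
        = (s ^ n) ^ a * (t ^ n) ^ b * (u ^ n) ^ (c - n * a * b) := by
      simp only [← zpow_natCast, ← zpow_mul]
      rw [s_t_u_zpow, ofCoords_inj]
      refine ⟨rfl, rfl, ?_⟩
      ring
    rw [h]
    refine mul_mem (mul_mem ?_ ?_) ?_ <;>
      exact zpow_mem (Subgroup.subset_closure (by simp)) _

lemma exists_residue {n : ℕ} (hn : 0 < n) (x : ℤ) :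
    ∃ k a : ℤ, (-(n : ℤ) < 2 * k ∧ 2 * k ≤ n) ∧ x = k + n * a := by
  have h0 := Int.emod_nonneg x (b := n) (by omega)
  have h1 := Int.emod_lt_of_pos x (b := n) (by omega)
  have h2 := Int.emod_add_mul_ediv x n
  by_cases h : 2 * (x % n) ≤ n
  · exact ⟨x % n, x / n, ⟨by omega, h⟩, h2.symm⟩
  · exact ⟨x % n - n, x / n + 1, ⟨by omega, by omega⟩, by linarith⟩

lemma residue_unique {n : ℕ} {k a k' a' : ℤ} (hk : -(n : ℤ) < 2 * k ∧ 2 * k ≤ n)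
    (hk' : -(n : ℤ) < 2 * k' ∧ 2 * k' ≤ n) (h : k + n * a = k' + n * a') : k = k' := by
  have hd : (n : ℤ) ∣ k - k' := ⟨a' - a, by linarith⟩
  have := Int.eq_zero_of_abs_lt_dvd hd (abs_lt.mpr ⟨by omega, by omega⟩)
  omega

lemma range_iff (n : ℕ) (k : ℤ) :
    (-(n : ℚ) / 2 < (k : ℚ) ∧ (k : ℚ) ≤ (n : ℚ) / 2) ↔ (-(n : ℤ) < 2 * k ∧ 2 * k ≤ n) := by
  rw [div_lt_iff₀ two_pos, le_div_iff₀ two_pos, mul_comm]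
  norm_cast

end Heisenberg

/-- For every positive integer `n`, with
`K_n = {s^k t^l u^m : −n/2 < k, l, m ≤ n/2}` and `L_n = ⟨s^n, t^n, u^n⟩`, every element of
the integer Heisenberg group is uniquely a product of an element of `K_n` and an element of
`L_n`. -/
theorem heisenberg_tiling (n : ℕ) (hn : 0 < n)
    (Kn : Set Heisenberg)
    (hKn : Kn = {g : Heisenberg | ∃ k l m : ℤ,
      (-(n : ℚ) / 2 < (k : ℚ) ∧ (k : ℚ) ≤ (n : ℚ) / 2) ∧
      (-(n : ℚ) / 2 < (l : ℚ) ∧ (l : ℚ) ≤ (n : ℚ) / 2) ∧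
      (-(n : ℚ) / 2 < (m : ℚ) ∧ (m : ℚ) ≤ (n : ℚ) / 2) ∧
      g = Heisenberg.s ^ k * Heisenberg.t ^ l * Heisenberg.u ^ m})
    (Ln : Subgroup Heisenberg)
    (hLn : Ln = Subgroup.closure {Heisenberg.s ^ n, Heisenberg.t ^ n, Heisenberg.u ^ n}) :
    ∀ g : Heisenberg, ∃! kl : Heisenberg × Heisenberg,
      kl.1 ∈ Kn ∧ kl.2 ∈ Ln ∧ g = kl.1 * kl.2 := by
  subst hKn hLn
  intro g
  obtain ⟨x, y, z, rfl⟩ := Heisenberg.exists_ofCoords g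
  simp only [Heisenberg.range_iff, Heisenberg.s_t_u_zpow, Heisenberg.mem_closure_iff,
    Set.mem_ofPred_eq]
  obtain ⟨k, a, hk, hx⟩ := Heisenberg.exists_residue hn x
  obtain ⟨l, b, hl, hy⟩ := Heisenberg.exists_residue hn y
  obtain ⟨m, c, hm, hz⟩ := Heisenberg.exists_residue hn (z - k * l - k * (n * b))
  have hg : Heisenberg.ofCoords x y z = Heisenberg.ofCoords k l (k * l + m) *
      Heisenberg.ofCoords (n * a) (n * b) (n * c) := by
    rw [Heisenberg.ofCoords_mul, Heisenberg.ofCoords_inj]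
    exact ⟨hx, hy, by linarith⟩
  refine ⟨(_, _), ⟨⟨k, l, m, hk, hl, hm, rfl⟩, ⟨a, b, c, rfl⟩, hg⟩, ?_⟩
  rintro ⟨p, q⟩ ⟨⟨k', l', m', hk', hl', hm', hp⟩, ⟨a', b', c', hq⟩, hg'⟩
  dsimp only at hp hq hg'
  subst hp hq
  -- The `L_n`-factor is determined by the `K_n`-factor, so only the latter has to be compared.
  suffices h : k' = k ∧ l' = l ∧ m' = m by
    obtain ⟨rfl, rfl, rfl⟩ := h
    exact Prod.ext rfl (mul_left_cancel (hg'.symm.trans hg))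
  rw [Heisenberg.ofCoords_mul, Heisenberg.ofCoords_inj] at hg'
  obtain ⟨e1, e2, e3⟩ := hg'
  obtain rfl : k' = k := Heisenberg.residue_unique hk' hk (e1.symm.trans hx)
  obtain rfl : l' = l := Heisenberg.residue_unique hl' hl (e2.symm.trans hy)
  have hb : (n : ℤ) * b' = n * b := by linarith
  rw [hb] at e3
  exact ⟨rfl, rfl, Heisenberg.residue_unique hm' hm (a := c') (a' := c) (by linarith)⟩
end

section
/- The subgroups L_n = ⟨s^n, t^n, u^n⟩ of the integer Heisenberg group H separate points: ⋂_{n ≥ 1} L_n = {1}; equivalently, for every g ∈ H with g ≠ 1 there exists n ≥ 1 with g ∉ L_n. -/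
/-!
Reduction modulo `n` is a homomorphism from the Heisenberg group to matrices over `ZMod n`. Each of
`s`, `t`, `u` is `1 + N` with `N ^ 2 = 0`, so its `n`-th power is `1 + n N`, which reduces to `1`.
Hence `L_n` lies in the kernel of reduction (`closure_le_ker_reduction`). A matrix in this kernel
differs from `1` by entries divisible by `n`, so it equals `1` as soon as `n` exceeds the absolute
values of all those entries.
-/

set_option linter.unnecessarySeqFocus false

namespace Heisenberg

/-- The inclusion of the Heisenberg group into the monoid of integer matrices. -/
def toMatrix : Heisenberg →* Matrix (Fin 3) (Fin 3) ℤ where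
  toFun g := Subtype.val g
  map_one' := rfl
  map_mul' _ _ := rfl

lemma toMatrix_injective : Function.Injective toMatrix := fun _ _ h => Subtype.ext h

/-- Entrywise reduction modulo `n`. The target is the monoid of all 3×3 matrices over `ZMod n`,
which suffices for forming the kernel. -/
def reduction (n : ℕ) : Heisenberg →* Matrix (Fin 3) (Fin 3) (ZMod n) :=
  (Int.castRingHom (ZMod n)).mapMatrix.toMonoidHom.comp toMatrix

lemma mem_ker_reduction_iff (n : ℕ) (g : Heisenberg) :
    g ∈ (reduction n).ker ↔ ∀ i j, (n : ℤ) ∣ (toMatrix g - 1) i j := by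
  rw [MonoidHom.mem_ker, ← Matrix.ext_iff]
  refine forall_congr' fun i => forall_congr' fun j => ?_
  rw [← ZMod.intCast_zmod_eq_zero_iff_dvd, Matrix.sub_apply, Int.cast_sub, sub_eq_zero]
  have hone : (((1 : Matrix (Fin 3) (Fin 3) ℤ) i j : ℤ) : ZMod n) =
      (1 : Matrix (Fin 3) (Fin 3) (ZMod n)) i j := by
    rw [Matrix.one_apply, Matrix.one_apply]
    split_ifs <;> simp
  rw [hone]
  rfl

/-- If the matrix of `x` is `1 + N` with `N ^ 2 = 0`, then `x ^ n = 1 + n N` reduces to `1`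
modulo `n`. -/
lemma pow_mem_ker_reduction (n : ℕ) (x : Heisenberg)
    (h : (toMatrix x - 1) * (toMatrix x - 1) = 0) : x ^ n ∈ (reduction n).ker := by
  have key : ∀ (N : Matrix (Fin 3) (Fin 3) ℤ), N * N = 0 → ∀ k : ℕ,
      (1 + N) ^ k = 1 + (k : ℤ) • N := by
    intro N hN k
    induction k with
    | zero => simp
    | succ k ih =>
      rw [pow_succ, ih, mul_add, add_mul _ _ N, smul_mul_assoc, hN]
      push_cast
      simp only [mul_one, one_mul, smul_zero, add_zero, add_smul, one_smul]
      abel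
  rw [mem_ker_reduction_iff]
  intro i j
  have hpow := key _ h n
  rw [add_sub_cancel, ← map_pow] at hpow
  rw [hpow, add_sub_cancel_left, Matrix.smul_apply, smul_eq_mul]
  exact dvd_mul_right _ _

lemma closure_le_ker_reduction (n : ℕ) :
    Subgroup.closure {s ^ n, t ^ n, u ^ n} ≤ (reduction n).ker := by
  rw [Subgroup.closure_le]
  rintro _ (rfl | rfl | rfl) <;> exact pow_mem_ker_reduction n _ (by decide)

/-- The congruence kernels separate points: it suffices to take `n` larger than the sum of the
absolute values of the entries of `g - 1`. -/
lemma exists_notMem_ker_reduction (g : Heisenberg) (hg : g ≠ 1) :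
    ∃ n : ℕ, 1 ≤ n ∧ g ∉ (reduction n).ker := by
  refine ⟨(∑ i, ∑ j, ((toMatrix g - 1) i j).natAbs) + 1, Nat.le_add_left _ _, fun hker => hg ?_⟩
  set n := (∑ i, ∑ j, ((toMatrix g - 1) i j).natAbs) + 1 with hn
  apply toMatrix_injective
  rw [map_one]
  ext i j
  have hlt : ((toMatrix g - 1) i j).natAbs < n := by
    have h1 := Finset.single_le_sum (f := fun j => ((toMatrix g - 1) i j).natAbs)
      (fun _ _ => Nat.zero_le _) (Finset.mem_univ j)
    have h2 := Finset.single_le_sum (f := fun i => ∑ j, ((toMatrix g - 1) i j).natAbs)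
      (fun _ _ => Nat.zero_le _) (Finset.mem_univ i)
    omega
  have hdvd : (n : ℤ) ∣ (toMatrix g - 1) i j := (mem_ker_reduction_iff n g).1 hker i j
  have hzero := Int.eq_zero_of_dvd_of_natAbs_lt_natAbs hdvd (by simpa using hlt)
  rwa [Matrix.sub_apply, sub_eq_zero] at hzero

end Heisenberg

/-- The subgroups `L_n = ⟨s^n, t^n, u^n⟩` of the integer Heisenberg group separate points:
`⋂_{n ≥ 1} L_n = {1}`, equivalently every `g ≠ 1` lies outside some `L_n`. -/
theorem heisenberg_subgroups_separate :
    (⨅ n : ℕ, ⨅ _ : 1 ≤ n,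
      Subgroup.closure {Heisenberg.s ^ n, Heisenberg.t ^ n, Heisenberg.u ^ n}) = ⊥ ∧
    (∀ g : Heisenberg, g ≠ 1 → ∃ n : ℕ, 1 ≤ n ∧
      g ∉ Subgroup.closure {Heisenberg.s ^ n, Heisenberg.t ^ n, Heisenberg.u ^ n}) := by
  have hsep : ∀ g : Heisenberg, g ≠ 1 → ∃ n : ℕ, 1 ≤ n ∧
      g ∉ Subgroup.closure {Heisenberg.s ^ n, Heisenberg.t ^ n, Heisenberg.u ^ n} := by
    intro g hg
    obtain ⟨n, hn, hmem⟩ := Heisenberg.exists_notMem_ker_reduction g hg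
    exact ⟨n, hn, fun h => hmem (Heisenberg.closure_le_ker_reduction n h)⟩
  refine ⟨?_, hsep⟩
  rw [eq_bot_iff]
  intro g hg
  by_contra hne
  obtain ⟨n, hn, hmem⟩ := hsep g (fun h => hne (Subgroup.mem_bot.2 h))
  exact hmem (Subgroup.mem_iInf.1 (Subgroup.mem_iInf.1 hg n) hn)
end
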